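/- For each integer n ≥ 2, let λ_n be the largest real root of the polynomial t^{4n} − 2t^{2n+1} − 2t^{2n−1} + 1 (such a root exists and satisfies λ_n > 1). Then lim_{n→∞} (4n + 2) · log λ_n = 2 · log(2 + √3). -/

import Mathlib

open Filter

/-- The clique polynomial `t^{4n} - 2t^{2n+1} - 2t^{2n-1} + 1` of the fibered class
`(2, 2n-1)₀`, as a real function. -/
noncomputable def Pfun (n : ℕ) (t : ℝ) : ℝ :=
  t ^ (4 * n) - 2 * t ^ (2 * n + 1) - 2 * t ^ (2 * n - 1) + 1

/-!
The polynomial is reciprocal: with `t = exp u` it equals `2 t^{2n} (cosh (2nu) - 2 cosh u)`.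
So `u = log λ_n > 0` solves `cosh (2nu) = 2 cosh u`. Comparing `cosh (2nu)` with
`cosh (2u) = 2 cosh² u - 1` gives `cosh u ≤ 2`; hence `2nu = arcosh (2 cosh u)` stays bounded,
which forces `u → 0` and then `2nu → arcosh 2 = log (2 + √3)`.
-/

open Topology Real

section CoshEquation

theorem cosh_le_of_cosh_mul_le {a u c : ℝ} (ha : 2 ≤ |a|) (h : cosh (a * u) ≤ c * cosh u) :
    cosh u ≤ c := by
  have hone : 1 ≤ cosh u := one_le_cosh u
  have hdouble : 2 * cosh u ^ 2 - 1 ≤ c * cosh u :=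
    calc 2 * cosh u ^ 2 - 1 = cosh (2 * u) := by rw [cosh_two_mul, sinh_sq]; ring
      _ ≤ cosh (a * u) := by
        rw [cosh_le_cosh, abs_mul, abs_mul, abs_two]
        gcongr
      _ ≤ c * cosh u := h
  by_contra! hlt
  nlinarith

variable {ι : Type*} {l : Filter ι} {a u : ι → ℝ} {c : ℝ}

theorem tendsto_zero_of_cosh_mul_eq (ha : Tendsto a l atTop) (hu : ∀ᶠ i in l, 0 ≤ u i)
    (h : ∀ᶠ i in l, cosh (a i * u i) = c * cosh (u i)) : Tendsto u l (𝓝 0) := by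
  refine squeeze_zero' hu ?_ (ha.const_div_atTop (arcosh (c * c)))
  filter_upwards [ha.eventually_ge_atTop 2, hu, h] with i hai hui hi
  have hcosh : cosh (u i) ≤ c := cosh_le_of_cosh_mul_le (hai.trans (le_abs_self _)) hi.le
  have hc : 0 < c := (cosh_pos _).trans_le hcosh
  rw [le_div_iff₀' (by linarith)]
  calc a i * u i = arcosh (c * cosh (u i)) := by rw [← hi, arcosh_cosh (by positivity)]
    _ ≤ arcosh (c * c) := by
      rw [arcosh_le_arcosh (mul_pos hc (cosh_pos _)) (mul_pos hc hc)]
      gcongr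

theorem tendsto_mul_of_cosh_mul_eq (hc : 1 ≤ c) (ha : Tendsto a l atTop)
    (hu : ∀ᶠ i in l, 0 ≤ u i) (h : ∀ᶠ i in l, cosh (a i * u i) = c * cosh (u i)) :
    Tendsto (fun i => a i * u i) l (𝓝 (arcosh c)) := by
  have hcosh : Tendsto (fun i => c * cosh (u i)) l (𝓝 c) := by
    simpa using ((continuous_cosh.tendsto 0).comp (tendsto_zero_of_cosh_mul_eq ha hu h)).const_mul c
  have hmem : ∀ᶠ i in l, c * cosh (u i) ∈ Set.Ici 1 :=
    h.mono fun i hi => hi ▸ one_le_cosh (a i * u i)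
  refine ((continuousOn_arcosh c hc).tendsto.comp
    (tendsto_nhdsWithin_iff.2 ⟨hcosh, hmem⟩)).congr' ?_
  filter_upwards [ha.eventually_ge_atTop 0, hu, h] with i hai hui hi
  rw [Function.comp_apply, ← hi, arcosh_cosh (mul_nonneg hai hui)]

end CoshEquation

section CliquePolynomial

variable {n : ℕ} {t : ℝ}

theorem Pfun_eq_mul_cosh_sub (hn : n ≠ 0) (ht : 0 < t) :
    Pfun n t = 2 * t ^ (2 * n) * (cosh (2 * n * log t) - 2 * cosh (log t)) := by
  have hlog : 2 * n * log t = log (t ^ (2 * n)) := by rw [log_pow]; push_cast; rfl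
  obtain ⟨m, rfl⟩ := Nat.exists_eq_succ_of_ne_zero hn
  rw [hlog, cosh_log (pow_pos ht _), cosh_log ht, Pfun,
    show 2 * m.succ - 1 = 2 * m + 1 by omega, Nat.succ_eq_add_one]
  field_simp
  ring

theorem Pfun_eq_zero_iff_cosh_eq (hn : n ≠ 0) (ht : 0 < t) :
    Pfun n t = 0 ↔ cosh (2 * n * log t) = 2 * cosh (log t) := by
  rw [Pfun_eq_mul_cosh_sub hn ht, mul_eq_zero_iff_left (by positivity), sub_eq_zero]

theorem Pfun_pos_of_four_le (hn : n ≠ 0) (ht : 4 ≤ t) : 0 < Pfun n t := by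
  have ht₀ : 0 < t := by linarith
  have hcosh : 2 < cosh (log t) := by
    rw [cosh_log ht₀]
    linarith [inv_pos.2 ht₀]
  have hn₂ : 2 ≤ |(2 * n : ℝ)| := by
    rw [abs_of_nonneg (by positivity)]
    exact_mod_cast Nat.le_mul_of_pos_right 2 (Nat.pos_of_ne_zero hn)
  have hlt : 2 * cosh (log t) < cosh (2 * n * log t) := by
    by_contra! hle
    exact hcosh.not_ge (cosh_le_of_cosh_mul_le hn₂ hle)
  rw [Pfun_eq_mul_cosh_sub hn ht₀]
  exact mul_pos (by positivity) (sub_pos.2 hlt)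

theorem continuous_Pfun (n : ℕ) : Continuous (Pfun n) := by
  unfold Pfun
  fun_prop

theorem exists_one_lt_Pfun_eq_zero (hn : n ≠ 0) : ∃ t, 1 < t ∧ Pfun n t = 0 := by
  have hone : Pfun n 1 < 0 := by norm_num [Pfun]
  obtain ⟨t, ht, hroot⟩ := intermediate_value_Ioo (by norm_num : (1 : ℝ) ≤ 4)
    (continuous_Pfun n).continuousOn ⟨hone, Pfun_pos_of_four_le hn le_rfl⟩
  exact ⟨t, ht.1, hroot⟩

theorem exists_one_lt_isGreatest_Pfun_eq_zero (hn : n ≠ 0) :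
    ∃ L, 1 < L ∧ IsGreatest {t | Pfun n t = 0} L := by
  obtain ⟨t, ht, hroot⟩ := exists_one_lt_Pfun_eq_zero hn
  have hclosed : IsClosed {t | Pfun n t = 0} := isClosed_eq (continuous_Pfun n) continuous_const
  have hbdd : BddAbove {t | Pfun n t = 0} :=
    ⟨4, fun r hr => le_of_not_ge fun hle => (Pfun_pos_of_four_le hn hle).ne' hr⟩
  have hmax := hclosed.isGreatest_csSup ⟨t, hroot⟩ hbdd
  exact ⟨_, ht.trans_le (hmax.2 hroot), hmax⟩

theorem tendsto_mul_log_of_Pfun_eq_zero {lam : ℕ → ℝ}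
    (h : ∀ᶠ n in atTop, 1 < lam n ∧ Pfun n (lam n) = 0) :
    Tendsto (fun n : ℕ => (4 * (n : ℝ) + 2) * log (lam n)) atTop
      (𝓝 (2 * log (2 + √3))) := by
  have hexp : Tendsto (fun n : ℕ => 2 * (n : ℝ)) atTop atTop :=
    tendsto_natCast_atTop_atTop.const_mul_atTop two_pos
  have hlog_nonneg : ∀ᶠ n in atTop, 0 ≤ log (lam n) := h.mono fun n hn => log_nonneg hn.1.le
  have hcosh : ∀ᶠ n : ℕ in atTop, cosh (2 * n * log (lam n)) = 2 * cosh (log (lam n)) := by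
    filter_upwards [h, eventually_ne_atTop 0] with n ⟨hlam, hroot⟩ hn
    exact (Pfun_eq_zero_iff_cosh_eq hn (one_pos.trans hlam)).1 hroot
  have hzero := tendsto_zero_of_cosh_mul_eq hexp hlog_nonneg hcosh
  have hmul := tendsto_mul_of_cosh_mul_eq one_le_two hexp hlog_nonneg hcosh
  have harcosh : arcosh 2 = log (2 + √3) := by norm_num [arcosh]
  rw [harcosh] at hmul
  convert (hmul.add hzero).const_mul 2 using 2 <;> ring

end CliquePolynomial

theorem stmt15 :
    (∀ n : ℕ, 2 ≤ n →
      ∃ L : ℝ, 1 < L ∧ Pfun n L = 0 ∧ ∀ r : ℝ, Pfun n r = 0 → r ≤ L) ∧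
    ∀ lam : ℕ → ℝ,
      (∀ n : ℕ, 2 ≤ n → Pfun n (lam n) = 0 ∧ ∀ r : ℝ, Pfun n r = 0 → r ≤ lam n) →
      Tendsto (fun n : ℕ => (4 * (n : ℝ) + 2) * Real.log (lam n)) atTop
        (nhds (2 * Real.log (2 + Real.sqrt 3))) := by
  refine ⟨fun n hn => exists_one_lt_isGreatest_Pfun_eq_zero (by omega), fun lam hlam => ?_⟩
  apply tendsto_mul_log_of_Pfun_eq_zero
  filter_upwards [eventually_ge_atTop 2] with n hn
  obtain ⟨hroot, hmax⟩ := hlam n hn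
  obtain ⟨t, ht, ht_root⟩ := exists_one_lt_Pfun_eq_zero (n := n) (by omega)
  exact ⟨ht.trans_le (hmax t ht_root), hroot⟩
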